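/- arXiv:2601.13395 — 8 statements merged into one kernel-verified Lean document; each statement's English description precedes it below -/
import Mathlib

section
/- Let x : ℂᵏ → ℂⁿ be real-differentiable at p₀ with Wirtinger decomposition (Jx, Jx') of fderiv ℝ x p₀, and let g : ℂⁿ × ℂᵏ → ℂᵐ be real-differentiable at (x p₀, p₀) with joint Wirtinger decomposition (fderiv ℝ g (x p₀, p₀))(u, w) = A·u + B·conj(u) + C·w + D·conj(w) for complex matrices A, B (size m×n) and C, D (size m×k). Suppose g(x p, p) = 0 for all p in a neighborhood of p₀. Then the matrix equations A·Jx + B·conj(Jx') + C = 0 and A·Jx' + B·conj(Jx) + D = 0 hold. -/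
theorem wirtinger_zero_aux {m k : ℕ} (P Q : Matrix (Fin m) (Fin k) ℂ)
    (h : ∀ v : Fin k → ℂ, P.mulVec v + Q.mulVec (fun j => starRingEnd ℂ (v j)) = 0) :
    P = 0 ∧ Q = 0 := by
  have key : ∀ i j, P i j + Q i j = 0 ∧ P i j - Q i j = 0 := by
    intro i j
    have hs : ∀ c : ℂ, P i j * c + Q i j * starRingEnd ℂ c = 0 := by
      intro c
      have h1 := congrFun (h (Pi.single j c)) i
      have e : (fun l => starRingEnd ℂ ((Pi.single j c : Fin k → ℂ) l))
          = Pi.single j (starRingEnd ℂ c) := by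
        ext l
        by_cases hl : l = j
        · subst hl; simp
        · simp [hl]
      rw [e] at h1
      simpa [Matrix.mulVec, dotProduct_single, mul_comm] using h1
    have h1 := hs 1
    have h2 := hs Complex.I
    simp only [map_one, mul_one, Complex.conj_I] at h1 h2
    refine ⟨h1, ?_⟩
    have h3 : (P i j - Q i j) * Complex.I = 0 := by linear_combination h2
    exact (mul_eq_zero.mp h3).resolve_right Complex.I_ne_zero
  constructor
  · ext i j
    obtain ⟨a, b⟩ := key i j
    simp only [Matrix.zero_apply]
    linear_combination (a + b) / 2
  · ext i j
    obtain ⟨a, b⟩ := key i j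
    simp only [Matrix.zero_apply]
    linear_combination (a - b) / 2

theorem conj_mulVec_aux {n k : ℕ} (M : Matrix (Fin n) (Fin k) ℂ) (v : Fin k → ℂ) (i : Fin n) :
    starRingEnd ℂ (M.mulVec v i)
      = (M.map (starRingEnd ℂ)).mulVec (fun j => starRingEnd ℂ (v j)) i := by
  simp [Matrix.mulVec, dotProduct, map_sum]

/-- Generalized adjoint constraint equations: if `x : ℂᵏ → ℂⁿ` has Wirtinger decomposition
`(Jx, Jx')` at `p₀`, `g : ℂⁿ × ℂᵏ → ℂᵐ` has joint Wirtinger decomposition `(A, B, C, D)`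
at `(x p₀, p₀)`, and `g (x p, p) = 0` near `p₀`, then
`A·Jx + B·conj(Jx') + C = 0` and `A·Jx' + B·conj(Jx) + D = 0`. -/
theorem generalized_adjoint_constraint_equations (n m k : ℕ)
    (x : (Fin k → ℂ) → (Fin n → ℂ)) (p₀ : Fin k → ℂ)
    (hx : DifferentiableAt ℝ x p₀)
    (Jx Jx' : Matrix (Fin n) (Fin k) ℂ)
    (hJx : ∀ v : Fin k → ℂ,
      fderiv ℝ x p₀ v = Jx.mulVec v + Jx'.mulVec (fun j => starRingEnd ℂ (v j)))
    (g : (Fin n → ℂ) × (Fin k → ℂ) → Fin m → ℂ)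
    (hg : DifferentiableAt ℝ g (x p₀, p₀))
    (A B : Matrix (Fin m) (Fin n) ℂ) (C D : Matrix (Fin m) (Fin k) ℂ)
    (hABCD : ∀ (u : Fin n → ℂ) (w : Fin k → ℂ),
      fderiv ℝ g (x p₀, p₀) (u, w) =
        A.mulVec u + B.mulVec (fun j => starRingEnd ℂ (u j)) +
        C.mulVec w + D.mulVec (fun j => starRingEnd ℂ (w j)))
    (hconstr : ∀ᶠ p in nhds p₀, g (x p, p) = 0) :
    A * Jx + B * Jx'.map (starRingEnd ℂ) + C = 0 ∧
    A * Jx' + B * Jx.map (starRingEnd ℂ) + D = 0 := by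
  apply wirtinger_zero_aux
  intro v
  have hc : HasFDerivAt (fun p => g (x p, p))
      ((fderiv ℝ g (x p₀, p₀)).comp
        ((fderiv ℝ x p₀).prod (ContinuousLinearMap.id ℝ (Fin k → ℂ)))) p₀ :=
    HasFDerivAt.comp (f := fun p => (x p, p)) p₀ hg.hasFDerivAt
      (hx.hasFDerivAt.prodMk (hasFDerivAt_id p₀))
  have h0 : HasFDerivAt (fun p => g (x p, p))
      (0 : (Fin k → ℂ) →L[ℝ] (Fin m → ℂ)) p₀ :=
    (hasFDerivAt_const (0 : Fin m → ℂ) p₀).congr_of_eventuallyEq hconstr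
  have h1 := congrArg (fun L : (Fin k → ℂ) →L[ℝ] (Fin m → ℂ) => L v) (hc.unique h0)
  have h2 : fderiv ℝ g (x p₀, p₀) (fderiv ℝ x p₀ v, v) = 0 := h1
  rw [hABCD, hJx] at h2
  have e : (fun j => starRingEnd ℂ
      ((Jx.mulVec v + Jx'.mulVec (fun j => starRingEnd ℂ (v j))) j))
      = (Jx.map (starRingEnd ℂ)).mulVec (fun j => starRingEnd ℂ (v j))
        + (Jx'.map (starRingEnd ℂ)).mulVec v := by
    ext j
    rw [Pi.add_apply, Pi.add_apply, map_add, conj_mulVec_aux, conj_mulVec_aux]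
    simp only [Complex.conj_conj]
  rw [e] at h2
  simp only [Matrix.mulVec_add, Matrix.mulVec_mulVec] at h2
  simp only [Matrix.add_mulVec]
  rw [← h2]
  abel
end

section
/- Under the hypotheses of the generalized adjoint constraint equations with m = n (x : ℂᵏ → ℂⁿ real-differentiable at p₀ with Wirtinger decomposition (Jx, Jx'); g : ℂⁿ × ℂᵏ → ℂⁿ real-differentiable at (x p₀, p₀) with joint decomposition matrices A, B ∈ Matrix n n ℂ and C, D ∈ Matrix n k ℂ; g(x p, p) = 0 near p₀), suppose in addition that the 2n×2n block matrix M with blocks [[A, B], [conj(B), conj(A)]] is invertible. Then the stacked 2n×k matrix with upper block Jx and lower block conj(Jx') equals M⁻¹ applied to the stacked matrix with upper block −C and lower block −conj(D); in particular Jx and Jx' are uniquely determined by A, B, C, D. -/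
theorem wirtinger_zero {n k : ℕ} (P Q : Matrix (Fin n) (Fin k) ℂ)
    (h : ∀ v : Fin k → ℂ, P.mulVec v + Q.mulVec (fun j => starRingEnd ℂ (v j)) = 0) :
    P = 0 ∧ Q = 0 := by
  have key : ∀ i j, P i j = 0 ∧ Q i j = 0 := by
    intro i j
    have conj_single : ∀ c : ℂ, (fun l => starRingEnd ℂ ((Pi.single j c : Fin k → ℂ) l)) =
        Pi.single j (starRingEnd ℂ c) := by
      intro c
      ext l
      by_cases hl : l = j
      · subst hl; simp
      · simp [hl]
    have h1 := congrFun (h (Pi.single j 1)) i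
    have h2 := congrFun (h (Pi.single j Complex.I)) i
    rw [conj_single] at h1 h2
    simp [Matrix.mulVec_single] at h1 h2
    have h3 : P i j - Q i j = 0 := by
      have : (P i j - Q i j) * Complex.I = 0 := by linear_combination h2
      exact (mul_eq_zero.mp this).resolve_right Complex.I_ne_zero
    exact ⟨by linear_combination (h1 + h3) / 2, by linear_combination (h1 - h3) / 2⟩
  exact ⟨by ext i j; exact (key i j).1, by ext i j; exact (key i j).2⟩

theorem conj_mulVec_fun {n k : ℕ} (P : Matrix (Fin n) (Fin k) ℂ) (v : Fin k → ℂ) :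
    (fun i => starRingEnd ℂ (P.mulVec v i)) =
      (P.map (starRingEnd ℂ)).mulVec (fun j => starRingEnd ℂ (v j)) := by
  ext i
  exact RingHom.map_mulVec (starRingEnd ℂ) P v i

/-- Generalized adjoint equation in block-matrix form: under the constraint equations with
`m = n`, if the block matrix `M = [[A, B], [conj B, conj A]]` is invertible, then the stacked
matrix `[Jx; conj Jx']` equals `M⁻¹ · [-C; -conj D]`, so `Jx, Jx'` are uniquely determined. -/
theorem generalized_adjoint_block_solution (n k : ℕ)
    (x : (Fin k → ℂ) → (Fin n → ℂ)) (p₀ : Fin k → ℂ)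
    (hx : DifferentiableAt ℝ x p₀)
    (Jx Jx' : Matrix (Fin n) (Fin k) ℂ)
    (hJx : ∀ v : Fin k → ℂ,
      fderiv ℝ x p₀ v = Jx.mulVec v + Jx'.mulVec (fun j => starRingEnd ℂ (v j)))
    (g : (Fin n → ℂ) × (Fin k → ℂ) → Fin n → ℂ)
    (hg : DifferentiableAt ℝ g (x p₀, p₀))
    (A B : Matrix (Fin n) (Fin n) ℂ) (C D : Matrix (Fin n) (Fin k) ℂ)
    (hABCD : ∀ (u : Fin n → ℂ) (w : Fin k → ℂ),
      fderiv ℝ g (x p₀, p₀) (u, w) =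
        A.mulVec u + B.mulVec (fun j => starRingEnd ℂ (u j)) +
        C.mulVec w + D.mulVec (fun j => starRingEnd ℂ (w j)))
    (hconstr : ∀ᶠ p in nhds p₀, g (x p, p) = 0)
    (hM : IsUnit (Matrix.fromBlocks A B
      (B.map (starRingEnd ℂ)) (A.map (starRingEnd ℂ))).det) :
    Matrix.fromRows Jx (Jx'.map (starRingEnd ℂ)) =
      (Matrix.fromBlocks A B (B.map (starRingEnd ℂ)) (A.map (starRingEnd ℂ)))⁻¹ *
        Matrix.fromRows (-C) (-(D.map (starRingEnd ℂ))) := by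
  have hcomp : HasFDerivAt (fun p => g (x p, p))
      ((fderiv ℝ g (x p₀, p₀)).comp
        ((fderiv ℝ x p₀).prod (ContinuousLinearMap.id ℝ (Fin k → ℂ)))) p₀ :=
    HasFDerivAt.comp (f := fun p => (x p, p)) p₀ hg.hasFDerivAt
      (hx.hasFDerivAt.prodMk (hasFDerivAt_id p₀))
  have hzero : HasFDerivAt (fun p => g (x p, p))
      (0 : (Fin k → ℂ) →L[ℝ] (Fin n → ℂ)) p₀ :=
    (hasFDerivAt_const (0 : Fin n → ℂ) p₀).congr_of_eventuallyEq hconstr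
  have heq := hcomp.unique hzero
  have hlin : ∀ v : Fin k → ℂ,
      (A * Jx + B * Jx'.map (starRingEnd ℂ) + C).mulVec v +
      (A * Jx' + B * Jx.map (starRingEnd ℂ) + D).mulVec (fun j => starRingEnd ℂ (v j)) = 0 := by
    intro v
    have hv : fderiv ℝ g (x p₀, p₀) (fderiv ℝ x p₀ v, v) = 0 :=
      congrArg (fun L : (Fin k → ℂ) →L[ℝ] (Fin n → ℂ) => L v) heq
    have hc : (fun j => starRingEnd ℂ
        ((Jx.mulVec v + Jx'.mulVec (fun j => starRingEnd ℂ (v j))) j)) =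
        (Jx.map (starRingEnd ℂ)).mulVec (fun j => starRingEnd ℂ (v j)) +
          (Jx'.map (starRingEnd ℂ)).mulVec v := by
      have e2 := conj_mulVec_fun Jx' (fun j => starRingEnd ℂ (v j))
      simp only [Complex.conj_conj] at e2
      rw [← conj_mulVec_fun, ← e2]
      ext j
      simp
    rw [hABCD, hJx, hc] at hv
    rw [← hv]
    simp only [Matrix.add_mulVec, Matrix.mulVec_add, Matrix.mulVec_mulVec]
    abel
  obtain ⟨h1, h2⟩ := wirtinger_zero _ _ hlin
  have h3 : B.map (starRingEnd ℂ) * Jx + A.map (starRingEnd ℂ) * Jx'.map (starRingEnd ℂ) +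
      D.map (starRingEnd ℂ) = 0 := by
    have h := congrArg (fun N : Matrix (Fin n) (Fin k) ℂ => N.map (starRingEnd ℂ)) h2
    have hJ : (Jx.map (starRingEnd ℂ)).map (starRingEnd ℂ) = Jx := by ext; simp
    simp only [Matrix.map_add _ (map_add (starRingEnd ℂ)), Matrix.map_mul, hJ,
      Matrix.map_zero _ (map_zero (starRingEnd ℂ))] at h
    rw [← h]
    abel
  have hmul : Matrix.fromBlocks A B (B.map (starRingEnd ℂ)) (A.map (starRingEnd ℂ)) *
      Matrix.fromRows Jx (Jx'.map (starRingEnd ℂ)) =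
      Matrix.fromRows (-C) (-(D.map (starRingEnd ℂ))) := by
    rw [Matrix.fromBlocks_mul_fromRows, eq_neg_of_add_eq_zero_left h1,
      eq_neg_of_add_eq_zero_left h3]
  rw [← hmul, Matrix.nonsing_inv_mul_cancel_left _ _ hM]
end

section
/- Let x : ℂᵏ → ℂⁿ be real-differentiable at p₀ with Wirtinger decomposition (Jx, Jx') of fderiv ℝ x p₀, and let f : ℂⁿ × ℂᵏ → ℝ be real-differentiable at (x p₀, p₀) with (fderiv ℝ f (x p₀, p₀))(u, w) = 2·Re(Σⱼ aⱼ·uⱼ) + 2·Re(Σⱼ cⱼ·wⱼ) for some a ∈ ℂⁿ, c ∈ ℂᵏ. Then the map p ↦ f(x p, p) is real-differentiable at p₀ and for every w ∈ ℂᵏ its derivative satisfies (fderiv ℝ (fun p => f (x p, p)) p₀)(w) = Re⟪G, w⟫, where G := Jxᴴ·(2·conj a) + (Jx')ᵀ·(2·a) + 2·conj c ∈ ℂᵏ. That is, G is the gradient of the constrained cost with respect to p. -/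
/-- Gradient of the constrained cost: if `x : ℂᵏ → ℂⁿ` has Wirtinger decomposition
`(Jx, Jx')` at `p₀` and `f : ℂⁿ × ℂᵏ → ℝ` has real derivative
`(u, w) ↦ 2 Re (∑ aⱼ uⱼ) + 2 Re (∑ cⱼ wⱼ)` at `(x p₀, p₀)`, then `p ↦ f (x p, p)` is
real-differentiable at `p₀` with derivative `w ↦ Re ⟪G, w⟫`, where
`G = Jxᴴ·(2 conj a) + Jx'ᵀ·(2 a) + 2 conj c`. -/
theorem constrained_cost_gradient (n k : ℕ)
    (x : (Fin k → ℂ) → (Fin n → ℂ)) (p₀ : Fin k → ℂ)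
    (hx : DifferentiableAt ℝ x p₀)
    (Jx Jx' : Matrix (Fin n) (Fin k) ℂ)
    (hJx : ∀ v : Fin k → ℂ,
      fderiv ℝ x p₀ v = Jx.mulVec v + Jx'.mulVec (fun j => starRingEnd ℂ (v j)))
    (f : (Fin n → ℂ) × (Fin k → ℂ) → ℝ)
    (hf : DifferentiableAt ℝ f (x p₀, p₀))
    (a : Fin n → ℂ) (c : Fin k → ℂ)
    (hfd : ∀ (u : Fin n → ℂ) (w : Fin k → ℂ),
      fderiv ℝ f (x p₀, p₀) (u, w) =
        2 * (∑ j, a j * u j).re + 2 * (∑ j, c j * w j).re) :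
    DifferentiableAt ℝ (fun p => f (x p, p)) p₀ ∧
    ∀ w : Fin k → ℂ,
      fderiv ℝ (fun p => f (x p, p)) p₀ w =
        (∑ j, starRingEnd ℂ
          ((Jx.conjTranspose.mulVec (fun i => 2 * starRingEnd ℂ (a i)) +
            Jx'.transpose.mulVec (fun i => 2 * a i) +
            fun i => 2 * starRingEnd ℂ (c i)) j) * w j).re := by
  have hg : HasFDerivAt (fun p => (x p, p))
      ((fderiv ℝ x p₀).prod (ContinuousLinearMap.id ℝ (Fin k → ℂ))) p₀ :=
    hx.hasFDerivAt.prodMk (hasFDerivAt_id p₀)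
  have hf' : HasFDerivAt f (fderiv ℝ f (x p₀, p₀)) ((fun p => (x p, p)) p₀) := hf.hasFDerivAt
  have hh := HasFDerivAt.comp (f := fun p => (x p, p)) p₀ hf' hg
  have hh' : HasFDerivAt (fun p => f (x p, p)) _ p₀ := hh
  refine ⟨hh'.differentiableAt, fun w => ?_⟩
  rw [hh'.fderiv]
  simp only [ContinuousLinearMap.comp_apply, ContinuousLinearMap.prod_apply,
    ContinuousLinearMap.id_apply]
  rw [hfd, hJx]
  simp only [Matrix.mulVec, dotProduct, Pi.add_apply, Matrix.conjTranspose_apply,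
    Matrix.transpose_apply, map_add, map_sum, map_mul, Complex.conj_conj, mul_add, add_mul,
    Finset.mul_sum, Finset.sum_mul, Finset.sum_add_distrib, Complex.add_re, Complex.re_sum]
  rw [Finset.sum_comm (f := fun (j : Fin k) (i : Fin n) => _),
    Finset.sum_comm (f := fun (j : Fin k) (i : Fin n) =>
      ((starRingEnd ℂ) (Jx' i j) * ((starRingEnd ℂ) 2 * (starRingEnd ℂ) (a i)) * w j).re)]
  congr 1
  · congr 1
    · refine Finset.sum_congr rfl fun i _ => Finset.sum_congr rfl fun j _ => ?_
      simp
      ring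
    · refine Finset.sum_congr rfl fun i _ => Finset.sum_congr rfl fun j _ => ?_
      simp
      ring
  · refine Finset.sum_congr rfl fun j _ => ?_
    simp
    ring
end

section
/- Under the hypotheses of the generalized adjoint constraint equations with m = n (x : ℂᵏ → ℂⁿ real-differentiable at p₀ with Wirtinger decomposition (Jx, Jx'); g : ℂⁿ × ℂᵏ → ℂⁿ real-differentiable at (x p₀, p₀) with joint decomposition matrices A, B ∈ Matrix n n ℂ and C, D ∈ Matrix n k ℂ; g(x p, p) = 0 near p₀), suppose that g is holomorphic in its first argument in the sense that B = 0, and that A is invertible. Then Jx = −A⁻¹·C and Jx' = −A⁻¹·D. -/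
theorem wirtinger_unique_zero {n k : ℕ} (M N : Matrix (Fin n) (Fin k) ℂ)
    (h : ∀ v : Fin k → ℂ, M.mulVec v + N.mulVec (fun j => starRingEnd ℂ (v j)) = 0) :
    M = 0 ∧ N = 0 := by
  have key : ∀ i j, M i j = 0 ∧ N i j = 0 := by
    intro i j
    have hs : ∀ c : ℂ, (fun l => starRingEnd ℂ ((Pi.single j c : Fin k → ℂ) l))
        = Pi.single j (starRingEnd ℂ c) := by
      intro c
      ext l
      by_cases hl : l = j
      · subst hl; simp
      · simp [hl]
    have h1 := congrFun (h (Pi.single j 1)) i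
    have h2 := congrFun (h (Pi.single j Complex.I)) i
    rw [hs] at h1 h2
    simp at h1 h2
    have h3 : M i j - N i j = 0 := by
      apply mul_left_cancel₀ Complex.I_ne_zero
      linear_combination h2
    constructor
    · linear_combination (h1 + h3) / 2
    · linear_combination (h1 - h3) / 2
  exact ⟨by ext i j; exact (key i j).1, by ext i j; exact (key i j).2⟩

/-- Adjoint equations when `g` is holomorphic in its first argument (`B = 0`) and `A`
is invertible: then `Jx = -A⁻¹·C` and `Jx' = -A⁻¹·D`. -/
theorem adjoint_holomorphic_in_x (n k : ℕ)
    (x : (Fin k → ℂ) → (Fin n → ℂ)) (p₀ : Fin k → ℂ)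
    (hx : DifferentiableAt ℝ x p₀)
    (Jx Jx' : Matrix (Fin n) (Fin k) ℂ)
    (hJx : ∀ v : Fin k → ℂ,
      fderiv ℝ x p₀ v = Jx.mulVec v + Jx'.mulVec (fun j => starRingEnd ℂ (v j)))
    (g : (Fin n → ℂ) × (Fin k → ℂ) → Fin n → ℂ)
    (hg : DifferentiableAt ℝ g (x p₀, p₀))
    (A B : Matrix (Fin n) (Fin n) ℂ) (C D : Matrix (Fin n) (Fin k) ℂ)
    (hABCD : ∀ (u : Fin n → ℂ) (w : Fin k → ℂ),
      fderiv ℝ g (x p₀, p₀) (u, w) =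
        A.mulVec u + B.mulVec (fun j => starRingEnd ℂ (u j)) +
        C.mulVec w + D.mulVec (fun j => starRingEnd ℂ (w j)))
    (hconstr : ∀ᶠ p in nhds p₀, g (x p, p) = 0)
    (hB : B = 0) (hA : IsUnit A.det) :
    Jx = -(A⁻¹ * C) ∧ Jx' = -(A⁻¹ * D) := by
  have hd : HasFDerivAt (fun p => g (x p, p))
      ((fderiv ℝ g (x p₀, p₀)).comp
        ((fderiv ℝ x p₀).prod (ContinuousLinearMap.id ℝ (Fin k → ℂ)))) p₀ :=
    HasFDerivAt.comp (f := fun p => (x p, p)) p₀ hg.hasFDerivAt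
      (hx.hasFDerivAt.prodMk (hasFDerivAt_id p₀))
  have hz : HasFDerivAt (fun p => g (x p, p))
      (0 : (Fin k → ℂ) →L[ℝ] (Fin n → ℂ)) p₀ :=
    (hasFDerivAt_const (0 : Fin n → ℂ) p₀).congr_of_eventuallyEq hconstr
  have he := hd.unique hz
  obtain ⟨h1, h2⟩ := wirtinger_unique_zero (A * Jx + C) (A * Jx' + D) (by
    intro v
    have hv := congrArg (fun L => L v) he
    simp only [ContinuousLinearMap.comp_apply, ContinuousLinearMap.prod_apply,
      ContinuousLinearMap.id_apply, hABCD, hJx, hB, ContinuousLinearMap.zero_apply,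
      Matrix.zero_mulVec, add_zero, Matrix.mulVec_add, Matrix.mulVec_mulVec] at hv
    rw [Matrix.add_mulVec, Matrix.add_mulVec, ← hv]
    abel)
  constructor
  · rw [← Matrix.mul_neg, ← eq_neg_of_add_eq_zero_left h1,
      Matrix.nonsing_inv_mul_cancel_left A _ hA]
  · rw [← Matrix.mul_neg, ← eq_neg_of_add_eq_zero_left h2,
      Matrix.nonsing_inv_mul_cancel_left A _ hA]
end

section
/- Under the hypotheses of the generalized adjoint constraint equations with m = n (x : ℂᵏ → ℂⁿ real-differentiable at p₀ with Wirtinger decomposition (Jx, Jx'); g : ℂⁿ × ℂᵏ → ℂⁿ real-differentiable at (x p₀, p₀) with joint decomposition matrices A, B, C, D; g(x p, p) = 0 near p₀), suppose that g is holomorphic in both arguments (B = 0 and D = 0), that x is holomorphic in p (Jx' = 0), and that A is invertible. Then Jx = −A⁻¹·C, and for any f : ℂⁿ × ℂᵏ → ℝ real-differentiable at (x p₀, p₀) with (fderiv ℝ f (x p₀, p₀))(u, w) = 2·Re(Σⱼ aⱼ·uⱼ) + 2·Re(Σⱼ cⱼ·wⱼ), the derivative of p ↦ f(x p, p) at p₀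 in direction w equals 2·Re( Σⱼ aⱼ·(−A⁻¹·C·w)ⱼ + Σⱼ cⱼ·wⱼ ). -/
/-- Adjoint method when everything but the cost is holomorphic: if `B = 0`, `D = 0`,
`Jx' = 0` and `A` is invertible, then `Jx = -A⁻¹·C`, and for a cost `f` with real derivative
`(u, w) ↦ 2 Re (∑ aⱼ uⱼ) + 2 Re (∑ cⱼ wⱼ)` at `(x p₀, p₀)`, the derivative of
`p ↦ f (x p, p)` at `p₀` in direction `w` is `2 Re (∑ aⱼ (-A⁻¹·C·w)ⱼ + ∑ cⱼ wⱼ)`. -/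
theorem adjoint_all_holomorphic_cost_derivative (n k : ℕ)
    (x : (Fin k → ℂ) → (Fin n → ℂ)) (p₀ : Fin k → ℂ)
    (hx : DifferentiableAt ℝ x p₀)
    (Jx Jx' : Matrix (Fin n) (Fin k) ℂ)
    (hJx : ∀ v : Fin k → ℂ,
      fderiv ℝ x p₀ v = Jx.mulVec v + Jx'.mulVec (fun j => starRingEnd ℂ (v j)))
    (g : (Fin n → ℂ) × (Fin k → ℂ) → Fin n → ℂ)
    (hg : DifferentiableAt ℝ g (x p₀, p₀))
    (A B : Matrix (Fin n) (Fin n) ℂ) (C D : Matrix (Fin n) (Fin k) ℂ)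
    (hABCD : ∀ (u : Fin n → ℂ) (w : Fin k → ℂ),
      fderiv ℝ g (x p₀, p₀) (u, w) =
        A.mulVec u + B.mulVec (fun j => starRingEnd ℂ (u j)) +
        C.mulVec w + D.mulVec (fun j => starRingEnd ℂ (w j)))
    (hconstr : ∀ᶠ p in nhds p₀, g (x p, p) = 0)
    (hB : B = 0) (hD : D = 0) (hJx' : Jx' = 0) (hA : IsUnit A.det)
    (f : (Fin n → ℂ) × (Fin k → ℂ) → ℝ)
    (hf : DifferentiableAt ℝ f (x p₀, p₀))
    (a : Fin n → ℂ) (c : Fin k → ℂ)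
    (hfd : ∀ (u : Fin n → ℂ) (w : Fin k → ℂ),
      fderiv ℝ f (x p₀, p₀) (u, w) =
        2 * (∑ j, a j * u j).re + 2 * (∑ j, c j * w j).re) :
    Jx = -(A⁻¹ * C) ∧
    ∀ w : Fin k → ℂ,
      fderiv ℝ (fun p => f (x p, p)) p₀ w =
        2 * ((∑ j, a j * (-(A⁻¹ * C)).mulVec w j) + ∑ j, c j * w j).re := by
  subst hB hD hJx'
  have hpair : HasFDerivAt (fun p => (x p, p))
      ((fderiv ℝ x p₀).prod (ContinuousLinearMap.id ℝ (Fin k → ℂ))) p₀ :=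
    hx.hasFDerivAt.prodMk (hasFDerivAt_id p₀)
  have hgc : HasFDerivAt (fun p => g (x p, p)) _ p₀ :=
    HasFDerivAt.comp (g := g) p₀ hg.hasFDerivAt hpair
  have hfc : HasFDerivAt (fun p => f (x p, p)) _ p₀ :=
    HasFDerivAt.comp (g := f) p₀ hf.hasFDerivAt hpair
  have hg0 : HasFDerivAt (fun p => g (x p, p))
      (0 : (Fin k → ℂ) →L[ℝ] (Fin n → ℂ)) p₀ :=
    (hasFDerivAt_const (0 : Fin n → ℂ) p₀).congr_of_eventuallyEq hconstr
  have huniq := hgc.unique hg0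
  have hx1 : ∀ v, fderiv ℝ x p₀ v = Jx.mulVec v := by
    intro v
    rw [hJx v]
    simp
  have hlin : A * Jx + C = 0 := by
    apply Matrix.ext_of_mulVec_single
    intro i
    have h := DFunLike.congr_fun huniq (Pi.single i 1)
    simp only [ContinuousLinearMap.comp_apply, ContinuousLinearMap.prod_apply,
      ContinuousLinearMap.id_apply, hABCD, hx1, ContinuousLinearMap.zero_apply,
      Matrix.zero_mulVec, add_zero, Matrix.mulVec_mulVec] at h
    rw [Matrix.add_mulVec, h, Matrix.zero_mulVec]
  have hJ : Jx = -(A⁻¹ * C) := by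
    have h1 : A * Jx = -C := eq_neg_of_add_eq_zero_left hlin
    rw [← Matrix.mul_neg, ← h1, Matrix.nonsing_inv_mul_cancel_left A Jx hA]
  refine ⟨hJ, fun w => ?_⟩
  rw [hfc.fderiv, ← hJ]
  simp only [ContinuousLinearMap.comp_apply, ContinuousLinearMap.prod_apply,
    ContinuousLinearMap.id_apply, hfd, hx1, Complex.add_re]
  ring
end

section
/- Adjoint method for holomorphic linear constraints with real parameters: let A : ℝᵏ → Matrix (Fin n) (Fin n) ℂ be differentiable at p₀ with A(p) invertible for all p in a neighborhood of p₀, let b ∈ ℂⁿ, and define x(p) := A(p)⁻¹·b. Let f : ℂⁿ → ℝ be real-differentiable at x(p₀) and let w ∈ ℂⁿ be its gradient there, i.e., (fderiv ℝ f (x p₀))(u) = Re⟪w, u⟫ for all u ∈ ℂⁿ. Let λ ∈ ℂⁿ be the solution of the adjoint equation A(p₀)ᴴ·λ = w. Then p ↦ f(x p) is differentiable at p₀ and for every v ∈ ℝᵏ, (fderiv ℝ (fun p => f (x p)) p₀)(v) = −Re⟪λ, (fderiv ℝ A p₀ v)·(x p₀)⟫. -/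
attribute [local instance] Matrix.normedAddCommGroup Matrix.normedSpace

theorem det_diff_aux {E : Type*} [NormedAddCommGroup E] [NormedSpace ℝ E] (n : ℕ)
    (M : E → Matrix (Fin n) (Fin n) ℂ) (p : E)
    (h : ∀ i j, DifferentiableAt ℝ (fun q => M q i j) p) :
    DifferentiableAt ℝ (fun q => (M q).det) p := by
  simp only [Matrix.det_apply']
  refine DifferentiableAt.fun_sum fun σ _ => ?_
  refine DifferentiableAt.const_mul ?_ _
  exact (HasFDerivAt.finset_prod fun i _ => (h (σ i) i).hasFDerivAt).differentiableAt

/-- Adjoint method for holomorphic linear constraints `A(p)·x = b` with real parameters: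
with `x p = A(p)⁻¹·b`, gradient `w` of `f` at `x p₀`, and adjoint variable `λ` solving
`A(p₀)ᴴ·λ = w`, the derivative of `p ↦ f (x p)` in direction `v` is
`-Re ⟪λ, (∂A/∂p [v])·(x p₀)⟫`. -/
theorem adjoint_method_linear_constraint (n k : ℕ)
    (A : (Fin k → ℝ) → Matrix (Fin n) (Fin n) ℂ) (p₀ : Fin k → ℝ)
    (hA : DifferentiableAt ℝ A p₀)
    (hAinv : ∀ᶠ p in nhds p₀, IsUnit (A p).det)
    (b : Fin n → ℂ)
    (x : (Fin k → ℝ) → (Fin n → ℂ))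
    (hxdef : ∀ p, x p = (A p)⁻¹.mulVec b)
    (f : (Fin n → ℂ) → ℝ)
    (hf : DifferentiableAt ℝ f (x p₀))
    (w : Fin n → ℂ)
    (hgrad : ∀ u : Fin n → ℂ,
      (fderiv ℝ f (x p₀)) u = (∑ j, starRingEnd ℂ (w j) * u j).re)
    (lam : Fin n → ℂ)
    (hlam : (A p₀).conjTranspose.mulVec lam = w) :
    DifferentiableAt ℝ (fun p => f (x p)) p₀ ∧
    ∀ v : Fin k → ℝ,
      fderiv ℝ (fun p => f (x p)) p₀ v =
        -(∑ j, starRingEnd ℂ (lam j) * (fderiv ℝ A p₀ v).mulVec (x p₀) j).re := by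
  have hAe : ∀ i j, HasFDerivAt (fun q => A q i j)
      ((ContinuousLinearMap.proj (R := ℝ) (φ := fun _ : Fin n => ℂ) j).comp
        ((ContinuousLinearMap.proj (R := ℝ) (φ := fun _ : Fin n => (Fin n → ℂ)) i).comp
          (fderiv ℝ A p₀))) p₀ := by
    intro i j
    have h1 := hasFDerivAt_pi'.1 hA.hasFDerivAt i
    exact hasFDerivAt_pi'.1 h1 j
  have hdet : DifferentiableAt ℝ (fun q => (A q).det) p₀ :=
    det_diff_aux n A p₀ fun i j => (hAe i j).differentiableAt
  have hne : (A p₀).det ≠ 0 := hAinv.self_of_nhds.ne_zero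
  have hadj : ∀ i j, DifferentiableAt ℝ (fun q => (A q).adjugate i j) p₀ := by
    intro i j
    simp only [Matrix.adjugate_apply]
    refine det_diff_aux n _ p₀ fun i' j' => ?_
    simp only [Matrix.updateRow_apply]
    split_ifs
    · exact differentiableAt_const _
    · exact (hAe i' j').differentiableAt
  have hx : DifferentiableAt ℝ x p₀ := by
    rw [differentiableAt_pi]
    intro i
    have : (fun q => x q i) = fun q => ∑ j, ((A q).det)⁻¹ * (A q).adjugate i j * b j := by
      funext q
      rw [hxdef, Matrix.inv_def]
      simp [Matrix.mulVec, dotProduct]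
    rw [this]
    refine DifferentiableAt.fun_sum fun j _ => ?_
    exact ((hdet.inv hne).mul (hadj i j)).mul_const _
  have hcomp : HasFDerivAt (fun p => f (x p)) ((fderiv ℝ f (x p₀)).comp (fderiv ℝ x p₀)) p₀ :=
    hf.hasFDerivAt.comp p₀ hx.hasFDerivAt
  refine ⟨hcomp.differentiableAt, fun v => ?_⟩
  rw [hcomp.fderiv, ContinuousLinearMap.comp_apply, hgrad]
  have key : ∀ i, ∑ j, (A p₀ i j * fderiv ℝ x p₀ v j + fderiv ℝ A p₀ v i j * x p₀ j) = 0 := by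
    intro i
    have h1 := HasFDerivAt.fun_sum (u := Finset.univ) fun j _ =>
      (hAe i j).mul (hasFDerivAt_pi'.1 hx.hasFDerivAt j)
    have h2 : (fun q => ∑ j, A q i j * x q j) =ᶠ[nhds p₀] fun _ => b i := by
      filter_upwards [hAinv] with q hq
      have : (A q).mulVec (x q) = b := by
        rw [hxdef, Matrix.mulVec_mulVec, Matrix.mul_nonsing_inv _ hq, Matrix.one_mulVec]
      exact congrFun this i
    have h3 := h1.unique ((hasFDerivAt_const (b i) p₀).congr_of_eventuallyEq h2)
    have h4 := DFunLike.congr_fun h3 v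
    simp only [ContinuousLinearMap.sum_apply, ContinuousLinearMap.add_apply,
      ContinuousLinearMap.smul_apply, ContinuousLinearMap.comp_apply,
      ContinuousLinearMap.proj_apply, ContinuousLinearMap.zero_apply, smul_eq_mul] at h4
    rw [← h4]
    refine Finset.sum_congr rfl fun j _ => ?_
    rw [mul_comm (x p₀ j)]
    rfl
  rw [← Complex.neg_re]
  congr 1
  rw [eq_neg_iff_add_eq_zero]
  have e1 : ∑ j, starRingEnd ℂ (w j) * fderiv ℝ x p₀ v j
      = ∑ i, starRingEnd ℂ (lam i) * ∑ j, A p₀ i j * fderiv ℝ x p₀ v j := by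
    rw [← hlam]
    simp only [Matrix.mulVec, dotProduct, Matrix.conjTranspose_apply, map_sum, map_mul,
      Finset.sum_mul, Finset.mul_sum]
    rw [Finset.sum_comm]
    refine Finset.sum_congr rfl fun i _ => Finset.sum_congr rfl fun j _ => ?_
    rw [starRingEnd_apply, star_star]
    ring
  rw [e1, ← Finset.sum_add_distrib]
  refine Finset.sum_eq_zero fun i _ => ?_
  have := key i
  rw [Finset.sum_add_distrib] at this
  rw [← mul_add]
  simp only [Matrix.mulVec, dotProduct]
  rw [this, mul_zero]
end

section
/- Conjugate structure of the Lagrangian adjoint variables: let A, B ∈ Matrix (Fin n) (Fin n) ℂ and w ∈ ℂⁿ. Suppose the 2n×2n block matrix with blocks [[Aᴴ, Bᵀ], [Bᴴ, Aᵀ]] is invertible, and let (λ₁, λ₂) ∈ ℂⁿ × ℂⁿ be the unique solution of the system Aᴴ·λ₁ + Bᵀ·λ₂ = w and Bᴴ·λ₁ + Aᵀ·λ₂ = conj(w). Then λ₂ = conj(λ₁). -/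
/-- Conjugate structure of the Lagrangian adjoint variables: if the block matrix
`[[Aᴴ, Bᵀ], [Bᴴ, Aᵀ]]` is invertible and `(λ₁, λ₂)` solves
`Aᴴ·λ₁ + Bᵀ·λ₂ = w`, `Bᴴ·λ₁ + Aᵀ·λ₂ = conj w`, then `λ₂ = conj λ₁`. -/
theorem lagrangian_adjoint_conjugate_structure (n : ℕ)
    (A B : Matrix (Fin n) (Fin n) ℂ) (w : Fin n → ℂ)
    (hM : IsUnit (Matrix.fromBlocks
      A.conjTranspose B.transpose B.conjTranspose A.transpose).det)
    (lam₁ lam₂ : Fin n → ℂ)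
    (h₁ : A.conjTranspose.mulVec lam₁ + B.transpose.mulVec lam₂ = w)
    (h₂ : B.conjTranspose.mulVec lam₁ + A.transpose.mulVec lam₂ =
      fun j => starRingEnd ℂ (w j)) :
    lam₂ = fun j => starRingEnd ℂ (lam₁ j) := by
  have e₁ : A.conjTranspose.mulVec (fun j => starRingEnd ℂ (lam₂ j)) +
      B.transpose.mulVec (fun j => starRingEnd ℂ (lam₁ j)) = w := by
    funext i
    have h := congrArg (starRingEnd ℂ) (congrFun h₂ i)
    simp only [Pi.add_apply, Matrix.mulVec, dotProduct, map_add, map_sum, map_mul,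
      Matrix.conjTranspose_apply, Matrix.transpose_apply, RCLike.star_def,
      Complex.conj_conj] at h ⊢
    rw [add_comm]
    exact h
  have e₂ : B.conjTranspose.mulVec (fun j => starRingEnd ℂ (lam₂ j)) +
      A.transpose.mulVec (fun j => starRingEnd ℂ (lam₁ j)) =
      fun j => starRingEnd ℂ (w j) := by
    funext i
    have h := congrArg (starRingEnd ℂ) (congrFun h₁ i)
    simp only [Pi.add_apply, Matrix.mulVec, dotProduct, map_add, map_sum, map_mul,
      Matrix.conjTranspose_apply, Matrix.transpose_apply, RCLike.star_def,
      Complex.conj_conj] at h ⊢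
    rw [add_comm]
    exact h
  have hinj := Matrix.mulVec_injective_of_isUnit ((Matrix.isUnit_iff_isUnit_det _).2 hM)
  have key : Sum.elim lam₁ lam₂ =
      Sum.elim (fun j => starRingEnd ℂ (lam₂ j)) (fun j => starRingEnd ℂ (lam₁ j)) := by
    apply hinj
    simp only [Matrix.fromBlocks_mulVec, Sum.elim_comp_inl, Sum.elim_comp_inr]
    rw [h₁, h₂, e₁, e₂]
  funext j
  exact congrFun key (Sum.inr j)
end

section
/- Standard (real) adjoint method: let x : ℝᵏ → ℝⁿ be differentiable at p₀, let g : ℝⁿ × ℝᵏ → ℝⁿ be differentiable at (x p₀, p₀) with (fderiv ℝ g (x p₀, p₀))(u, w) = G₁·u + G₂·w for matrices G₁ ∈ Matrix n n ℝ and G₂ ∈ Matrix n k ℝ, and suppose g(x p, p) = 0 for all p in a neighborhood of p₀ and that G₁ is invertible. Let f : ℝⁿ → ℝ be differentiable at x p₀ with gradient ∇f ∈ ℝⁿ (i.e., (fderiv ℝ f (x p₀))(u) = ⟨∇f, u⟩ for all u), and let λ ∈ ℝⁿ solve the adjoint equation G₁ᵀ·λ = −∇f. Then for every v ∈ ℝᵏ,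 (fderiv ℝ (fun p => f (x p)) p₀)(v) = ⟨G₂ᵀ·λ, v⟩. -/
/-- The standard (real) adjoint method: with constraint `g (x p, p) = 0` near `p₀`,
Jacobians `G₁` (invertible) and `G₂` of `g`, gradient `∇f` of the cost `f` at `x p₀`,
and adjoint variable `λ` solving `G₁ᵀ·λ = -∇f`, the derivative of `p ↦ f (x p)` at `p₀`
in direction `v` equals `⟨G₂ᵀ·λ, v⟩`. -/
theorem standard_real_adjoint_method (n k : ℕ)
    (x : (Fin k → ℝ) → (Fin n → ℝ)) (p₀ : Fin k → ℝ)
    (hx : DifferentiableAt ℝ x p₀)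
    (g : (Fin n → ℝ) × (Fin k → ℝ) → Fin n → ℝ)
    (hg : DifferentiableAt ℝ g (x p₀, p₀))
    (G₁ : Matrix (Fin n) (Fin n) ℝ) (G₂ : Matrix (Fin n) (Fin k) ℝ)
    (hGd : ∀ (u : Fin n → ℝ) (w : Fin k → ℝ),
      fderiv ℝ g (x p₀, p₀) (u, w) = G₁.mulVec u + G₂.mulVec w)
    (hconstr : ∀ᶠ p in nhds p₀, g (x p, p) = 0)
    (hG₁ : IsUnit G₁.det)
    (f : (Fin n → ℝ) → ℝ) (hf : DifferentiableAt ℝ f (x p₀))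
    (gradf : Fin n → ℝ)
    (hgrad : ∀ u : Fin n → ℝ, fderiv ℝ f (x p₀) u = ∑ j, gradf j * u j)
    (lam : Fin n → ℝ) (hlam : G₁.transpose.mulVec lam = -gradf) :
    ∀ v : Fin k → ℝ,
      fderiv ℝ (fun p => f (x p)) p₀ v = ∑ j, G₂.transpose.mulVec lam j * v j := by
  intro v
  have h1 : HasFDerivAt (fun p => f (x p)) ((fderiv ℝ f (x p₀)).comp (fderiv ℝ x p₀)) p₀ :=
    HasFDerivAt.comp p₀ hf.hasFDerivAt hx.hasFDerivAt
  have h2 : HasFDerivAt (fun p => g (x p, p))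
      ((fderiv ℝ g (x p₀, p₀)).comp
        ((fderiv ℝ x p₀).prod (ContinuousLinearMap.id ℝ (Fin k → ℝ)))) p₀ :=
    HasFDerivAt.comp (f := fun p => (x p, p)) p₀ hg.hasFDerivAt
      (hx.hasFDerivAt.prodMk (hasFDerivAt_id p₀))
  have h3 : HasFDerivAt (fun p => g (x p, p)) (0 : (Fin k → ℝ) →L[ℝ] (Fin n → ℝ)) p₀ :=
    (hasFDerivAt_const (0 : Fin n → ℝ) p₀).congr_of_eventuallyEq hconstr
  have h4 : G₁.mulVec (fderiv ℝ x p₀ v) + G₂.mulVec v = 0 := by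
    rw [← hGd]
    exact DFunLike.congr_fun (h2.unique h3) v
  have hg' : gradf = -(G₁.transpose.mulVec lam) := by rw [hlam, neg_neg]
  rw [h1.fderiv, ContinuousLinearMap.comp_apply, hgrad]
  change gradf ⬝ᵥ (fderiv ℝ x p₀ v) = (G₂.transpose.mulVec lam) ⬝ᵥ v
  rw [hg', neg_dotProduct, Matrix.mulVec_transpose, Matrix.mulVec_transpose,
    ← Matrix.dotProduct_mulVec, ← Matrix.dotProduct_mulVec, eq_neg_of_add_eq_zero_left h4,
    dotProduct_neg, neg_neg]
end
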